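/- Assume ‖Σ*‖ ∨ ‖Ω*‖ = O(1) and p³/n = o(1). Then for any sequence δ_n = o(1), sup over positive-definite p×p matrices Σ in the set {Σ : √(n/p)·‖Σ − Σ*‖_F² ∨ √p·‖Σ − Σ*‖_F ≤ δ_n} of the quantity √(n/p)·| log det(Σ) − log det(Σ̂) − tr((Σ − Σ̂)·Ω*) | is o_P(1), i.e., this supremum converges to 0 in probability under P_{Σ*}^n as n → ∞. -/

import Mathlib

open MeasureTheory ProbabilityTheory Filter Matrix

noncomputable section

namespace BvMPaper

instance instMeasurableSpaceMatrix {m n : Type*} : MeasurableSpace (Matrix m n ℝ) :=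
  inferInstanceAs (MeasurableSpace (m → n → ℝ))

/-- Spectral (operator) norm of a real square matrix. -/
def specNorm {p : ℕ} (A : Matrix (Fin p) (Fin p) ℝ) : ℝ :=
  ‖Matrix.toEuclideanCLM (𝕜 := ℝ) A‖

/-- Frobenius norm of a real matrix. -/
def frobNorm {p : ℕ} (A : Matrix (Fin p) (Fin p) ℝ) : ℝ :=
  Real.sqrt (∑ i, ∑ j, (A i j) ^ 2)

/-- Euclidean norm of a vector. -/
def vecNorm {p : ℕ} (v : Fin p → ℝ) : ℝ :=
  Real.sqrt (∑ i, (v i) ^ 2)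

open Classical in
/-- Square root of a positive semidefinite matrix (junk value `0` otherwise). -/
def matSqrt {p : ℕ} (A : Matrix (Fin p) (Fin p) ℝ) : Matrix (Fin p) (Fin p) ℝ :=
  if h : A.PosSemidef then
    h.1.eigenvectorUnitary.1 * Matrix.diagonal (Real.sqrt ∘ h.1.eigenvalues) *
      (star h.1.eigenvectorUnitary : Matrix (Fin p) (Fin p) ℝ)
  else 0

/-- Sample covariance matrix `(1/n) ∑ x_i x_iᵀ`. -/
def sampleCov {n p : ℕ} (x : Fin n → Fin p → ℝ) : Matrix (Fin p) (Fin p) ℝ :=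
  (n : ℝ)⁻¹ • ∑ i, Matrix.vecMulVec (x i) (x i)

/-- Centered Gaussian log-likelihood `l_n(Ω)`. -/
def logLik {n p : ℕ} (x : Fin n → Fin p → ℝ) (Ω : Matrix (Fin p) (Fin p) ℝ) : ℝ :=
  (n : ℝ) / 2 * Real.log Ω.det - (n : ℝ) / 2 * (Ω * sampleCov x).trace

/-- Posterior mass `Π(B | X^n)` of a set `B` of precision matrices. -/
def post {n p : ℕ} (prior : Measure (Matrix (Fin p) (Fin p) ℝ))
    (x : Fin n → Fin p → ℝ) (B : Set (Matrix (Fin p) (Fin p) ℝ)) : ℝ :=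
  (∫ Ω in B, Real.exp (logLik x Ω) ∂prior) / (∫ Ω, Real.exp (logLik x Ω) ∂prior)

/-- Standard normal cumulative distribution function `P(Z ≤ t)`. -/
def stdCDF (t : ℝ) : ℝ := (gaussianReal 0 1 (Set.Iic t)).toReal

/-- `μ` is the Gaussian distribution `N(m, S)` on `ℝ^p`, characterized through
one-dimensional projections. -/
def IsGaussianLaw {p : ℕ} (μ : Measure (Fin p → ℝ)) (m : Fin p → ℝ)
    (S : Matrix (Fin p) (Fin p) ℝ) : Prop :=
  IsProbabilityMeasure μ ∧
    ∀ u : Fin p → ℝ,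
      μ.map (fun x => ∑ i, u i * x i) =
        gaussianReal (∑ i, u i * m i) (Real.toNNReal (u ⬝ᵥ S.mulVec u))

/-- The law of an i.i.d. sample of size `n` from `μ`. -/
def iidLaw {β : Type*} [MeasurableSpace β] (n : ℕ) (μ : Measure β) :
    Measure (Fin n → β) :=
  Measure.pi fun _ => μ

/-- Convergence to `0` in probability (`o_P(1)`). -/
def oP {α : ℕ → Type*} [∀ n, MeasurableSpace (α n)] (P : ∀ n, Measure (α n))
    (f : ∀ n, α n → ℝ) : Prop :=
  ∀ ε : ℝ, 0 < ε → Tendsto (fun n => P n {x | ε ≤ |f n x|}) atTop (nhds 0)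

/-- Bounded sequence (`O(1)`). -/
def BigO1 (a : ℕ → ℝ) : Prop := ∃ C : ℝ, ∀ n, a n ≤ C

/-- Vanishing sequence (`o(1)`). -/
def SmallO1 (a : ℕ → ℝ) : Prop := Tendsto a atTop (nhds 0)

/-- The standard Gaussian distribution `N(0, I_p)` on `ℝ^p`. -/
def stdGaussVec (p : ℕ) : Measure (Fin p → ℝ) :=
  Measure.pi fun _ => gaussianReal 0 1

/-- The Wishart prior `W_p(I, p + b - 1)`: the law of `∑_{l=1}^{p+b-1} Z_l Z_lᵀ` for
`Z_1, …, Z_{p+b-1}` i.i.d. `N(0, I_p)`. -/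
def wishartPrior (p b : ℕ) : Measure (Matrix (Fin p) (Fin p) ℝ) :=
  (Measure.pi fun _ : Fin (p + b - 1) => stdGaussVec p).map
    (fun Z => ∑ l, Matrix.vecMulVec (Z l) (Z l))

/-- Lebesgue measure on symmetric `p × p` matrices (pushforward of Lebesgue measure on
the upper-triangular coordinates). -/
def symLebesgue (p : ℕ) : Measure (Matrix (Fin p) (Fin p) ℝ) :=
  Measure.map
    (fun f : ({ij : Fin p × Fin p // ij.1 ≤ ij.2} → ℝ) =>
      Matrix.of fun i j =>
        if h : i ≤ j then f ⟨(i, j), h⟩ else f ⟨(j, i), le_of_not_ge h⟩)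
    volume

/-- The support of the Gaussian prior with parameter `Λ`:
`{Ω : Ω = Ωᵀ, ‖Ω‖ < 2Λ, ‖Ω⁻¹‖ ≤ 2Λ}`. -/
def gaussSupport (p : ℕ) (L : ℝ) : Set (Matrix (Fin p) (Fin p) ℝ) :=
  {Ω | Ω.IsSymm ∧ specNorm Ω < 2 * L ∧ specNorm Ω⁻¹ ≤ 2 * L}

/-- The Gaussian prior with parameter `Λ`: density proportional to `exp(-‖Ω‖_F²/2)`
with respect to Lebesgue measure on symmetric matrices, restricted to `gaussSupport p Λ`. -/
def gaussianPrior (p : ℕ) (L : ℝ) : Measure (Matrix (Fin p) (Fin p) ℝ) :=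
  let μ := ((symLebesgue p).restrict (gaussSupport p L)).withDensity
    (fun Ω => ENNReal.ofReal (Real.exp (- frobNorm Ω ^ 2 / 2)))
  (μ Set.univ)⁻¹ • μ

open Classical in
/-- The eigenvalues of a symmetric matrix, sorted in increasing order (junk value `[]`
if the matrix is not symmetric). -/
def eigsAsc {p : ℕ} (A : Matrix (Fin p) (Fin p) ℝ) : List ℝ :=
  if hA : A.IsHermitian then (Finset.univ.val.map hA.eigenvalues).sort (· ≤ ·) else []

/-- `lamK A m` is the `(m+1)`-th largest eigenvalue of `A` (`0`-indexed, so that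
`lamK A 0 = λ_1(A)` is the largest eigenvalue and `lamK A (p-1) = λ_p(A)` the smallest). -/
def lamK {p : ℕ} (A : Matrix (Fin p) (Fin p) ℝ) (m : ℕ) : ℝ :=
  (eigsAsc A).getD (p - 1 - m) 0

/-- The eigengap of the eigenvalue `lamK A m` (`0`-indexed `m`). -/
def eigengap {p : ℕ} (A : Matrix (Fin p) (Fin p) ℝ) (m : ℕ) : ℝ :=
  if m = 0 then |lamK A 0 - lamK A 1|
  else if m = p - 1 then |lamK A (p - 2) - lamK A (p - 1)|
  else min |lamK A m - lamK A (m - 1)| |lamK A m - lamK A (m + 1)|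

lemma abs_log_sub_le (x : ℝ) (hx : |x| ≤ 1/2) : |Real.log (1 + x) - x| ≤ 2 * x^2 := by
  have h := abs_le.1 hx
  have hpos : (0:ℝ) < 1 + x := by linarith
  have h1 := Real.log_le_sub_one_of_pos hpos
  have h2 := Real.one_sub_inv_le_log_of_pos hpos
  have h3 : x - 2 * x^2 ≤ 1 - (1+x)⁻¹ := by
    have : 1 - (1+x)⁻¹ - (x - 2*x^2) = x^2 * (1 + 2 * x) / (1+x) := by
      field_simp; ring
    have h4 : 0 ≤ x^2 * (1 + 2 * x) / (1+x) := by
      apply div_nonneg _ hpos.le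
      apply mul_nonneg (sq_nonneg _); linarith
    linarith
  rw [abs_le]; constructor <;> nlinarith [sq_nonneg x]

lemma frobNorm_nonneg {p : ℕ} (A : Matrix (Fin p) (Fin p) ℝ) : 0 ≤ frobNorm A := Real.sqrt_nonneg _

lemma frobNorm_sq {p : ℕ} (A : Matrix (Fin p) (Fin p) ℝ) :
    frobNorm A ^ 2 = ∑ i, ∑ j, (A i j) ^ 2 :=
  Real.sq_sqrt (by positivity)

lemma specNorm_mulVec {p : ℕ} (A : Matrix (Fin p) (Fin p) ℝ) (v : Fin p → ℝ) :
    ∑ i, (A *ᵥ v) i ^ 2 ≤ specNorm A ^ 2 * ∑ i, v i ^ 2 := by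
  have h := (Matrix.toEuclideanCLM (𝕜 := ℝ) A).le_opNorm (WithLp.toLp 2 v)
  have h2 := mul_self_le_mul_self (norm_nonneg _) h
  rw [mul_mul_mul_comm, ← sq, ← sq, ← sq, EuclideanSpace.norm_sq_eq, EuclideanSpace.norm_sq_eq] at h2
  simpa [specNorm, Real.norm_eq_abs, sq_abs] using h2

lemma specNorm_nonneg {p : ℕ} (A : Matrix (Fin p) (Fin p) ℝ) : 0 ≤ specNorm A := norm_nonneg _

lemma diag_le_specNorm {p : ℕ} (A : Matrix (Fin p) (Fin p) ℝ) (i : Fin p) :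
    A i i ≤ specNorm A := by
  have h := specNorm_mulVec A (Pi.single i 1)
  have h1 : ∑ j, (Pi.single i 1 : Fin p → ℝ) j ^ 2 = 1 := by
    simp [Pi.single_apply]
  rw [h1, mul_one] at h
  have h2 : A i i ^ 2 ≤ specNorm A ^ 2 := by
    refine le_trans ?_ h
    have := Finset.single_le_sum (f := fun k => (A *ᵥ (Pi.single i 1)) k ^ 2)
      (fun k _ => sq_nonneg _) (Finset.mem_univ i)
    simpa using this
  exact (abs_le_of_sq_le_sq' h2 (specNorm_nonneg A)).2

lemma trace_sq_eq {p : ℕ} (M : Matrix (Fin p) (Fin p) ℝ) (hM : M.IsHermitian) :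
    (M * M).trace = ∑ i, hM.eigenvalues i ^ 2 ∧ (1 + M).det = ∏ i, (1 + hM.eigenvalues i) := by
  have h := hM.spectral_theorem
  set U := hM.eigenvectorUnitary
  set d := hM.eigenvalues
  have h' : M = (U : Matrix _ _ ℝ) * diagonal d * star (U : Matrix _ _ ℝ) := by
    simpa [Unitary.conjStarAlgAut_apply] using h
  have hU : star (U : Matrix (Fin p) (Fin p) ℝ) * U = 1 := Unitary.coe_star_mul_self U
  have hU' : (U : Matrix (Fin p) (Fin p) ℝ) * star (U : Matrix (Fin p) (Fin p) ℝ) = 1 :=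
    Unitary.coe_mul_star_self U
  constructor
  · have : M * M = (U : Matrix _ _ ℝ) * (diagonal d * diagonal d) * star (U : Matrix _ _ ℝ) := by
      calc M * M = (U : Matrix _ _ ℝ) * diagonal d * (star (U : Matrix (Fin p) (Fin p) ℝ) * (U : Matrix (Fin p) (Fin p) ℝ)) * diagonal d * star (U : Matrix _ _ ℝ) := by
            conv_lhs => rw [h']
            simp only [Matrix.mul_assoc]
        _ = _ := by rw [hU]; simp only [Matrix.mul_assoc, Matrix.one_mul]
    rw [this, Matrix.trace_mul_comm, ← Matrix.mul_assoc, hU, Matrix.one_mul, diagonal_mul_diagonal,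
      trace_diagonal]
    simp [sq]
  · have : 1 + M = (U : Matrix _ _ ℝ) * (1 + diagonal d) * star (U : Matrix _ _ ℝ) := by
      rw [Matrix.mul_add, Matrix.add_mul, ← h', Matrix.mul_one, hU']
    rw [this, det_mul_right_comm, hU', Matrix.one_mul, ← diagonal_one, diagonal_add, det_diagonal]

lemma trace_sq_le {p : ℕ} (X : Matrix (Fin p) (Fin p) ℝ) : (X * X).trace ≤ ∑ i, ∑ j, X i j ^ 2 := by
  simp only [Matrix.trace, Matrix.diag, Matrix.mul_apply]
  have h1 : ∑ i, ∑ j, X i j * X j i ≤ ∑ i, ∑ j, (X i j ^ 2 / 2 + X j i ^ 2 / 2) := by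
    gcongr with i _ j _
    nlinarith [sq_nonneg (X i j - X j i)]
  refine h1.trans (le_of_eq ?_)
  simp only [Finset.sum_add_distrib]
  rw [Finset.sum_comm (f := fun i j => X j i ^ 2 / 2)]
  simp only [← Finset.sum_add_distrib, add_halves]

lemma frob_mul_le {p : ℕ} (D O : Matrix (Fin p) (Fin p) ℝ) (hO : Oᵀ = O) :
    ∑ i, ∑ j, (D * O) i j ^ 2 ≤ specNorm O ^ 2 * frobNorm D ^ 2 := by
  rw [frobNorm_sq, Finset.mul_sum]
  gcongr with i _
  have h := specNorm_mulVec O (D i)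
  convert! h using 3 with j
  have : (D * O) i j = (D * Oᵀ) i j := by rw [hO]
  rw [this]
  simp [Matrix.mul_apply, mulVec, dotProduct, mul_comm]

open scoped MatrixOrder Matrix.Norms.L2Operator in
lemma exists_factor {p : ℕ} (A : Matrix (Fin p) (Fin p) ℝ) (hA : A.PosSemidef) :
    ∃ B : Matrix (Fin p) (Fin p) ℝ, A = Bᵀ * B := by
  obtain ⟨B, hB⟩ := CStarAlgebra.nonneg_iff_eq_star_mul_self.mp hA.nonneg
  exact ⟨B, by rw [hB, star_eq_conjTranspose, conjTranspose_eq_transpose_of_trivial]⟩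

lemma logdet_det_bound {p : ℕ} (S A : Matrix (Fin p) (Fin p) ℝ) (hS : S.PosDef) (hA : A.IsHermitian)
    (K : ℝ) (hK : specNorm S⁻¹ ≤ K) (hD : K * frobNorm (A - S) ≤ 1/2) :
    |Real.log A.det - Real.log S.det - ((A - S) * S⁻¹).trace| ≤ 2 * (K^2 * frobNorm (A - S)^2) := by
  classical
  have hO : S⁻¹.PosDef := hS.inv
  obtain ⟨B, hB⟩ : ∃ B : Matrix (Fin p) (Fin p) ℝ, S⁻¹ = Bᵀ * B := by
    exact exists_factor _ hO.posSemidef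
  have hSdet : 0 < S.det := hS.det_pos
  have hSu : IsUnit S.det := hSdet.ne'.isUnit
  have hBB : S.det * (B.det * B.det) = 1 := by
    have := congrArg Matrix.det (Matrix.mul_nonsing_inv S hSu)
    rw [hB] at this
    simpa using this
  have hBu : IsUnit B.det := by
    rw [isUnit_iff_ne_zero]; rintro h; simp [h] at hBB
  have hBSB : B * S * Bᵀ = 1 := by
    have h1 : Bᵀ * B * S = 1 := by rw [← hB]; exact Matrix.nonsing_inv_mul S hSu
    rw [Matrix.mul_assoc] at h1
    exact mul_eq_one_comm.1 h1
  set D := A - S with hDdef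
  have hDt : Dᵀ = D := by
    have h1 : Aᵀ = A := by simpa [Matrix.IsHermitian] using hA
    have h2 : Sᵀ = S := by simpa [Matrix.IsHermitian] using hS.1
    simp [hDdef, h1, h2]
  set M := B * D * Bᵀ with hMdef
  have hM : M.IsHermitian := by
    simp [Matrix.IsHermitian, hMdef, hDt, Matrix.mul_assoc]
  obtain ⟨ht2, hdet⟩ := trace_sq_eq M hM
  have htr : M.trace = ∑ i, hM.eigenvalues i := by
    simpa using hM.trace_eq_sum_eigenvalues
  have htr' : M.trace = (D * S⁻¹).trace := by
    rw [hMdef, Matrix.mul_assoc, Matrix.trace_mul_comm, hB, Matrix.mul_assoc]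
  have hsq : ∑ i, hM.eigenvalues i ^ 2 ≤ K ^ 2 * frobNorm D ^ 2 := by
    rw [← ht2]
    have h1 : (M * M).trace = ((D * S⁻¹) * (D * S⁻¹)).trace := by
      rw [hMdef, hB]
      rw [show B * D * Bᵀ * (B * D * Bᵀ) = B * (D * Bᵀ * B * D * Bᵀ) by simp only [Matrix.mul_assoc],
        Matrix.trace_mul_comm]
      simp only [Matrix.mul_assoc]
    rw [h1]
    refine (trace_sq_le _).trans ((frob_mul_le _ _ ?_).trans ?_)
    · rw [hB]; simp
    · gcongr
      exact specNorm_nonneg _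
  have hdetA : A.det = S.det * ∏ i, (1 + hM.eigenvalues i) := by
    rw [← hdet]
    have h1 : 1 + M = B * A * Bᵀ := by
      rw [← hBSB, hMdef, ← Matrix.add_mul, ← Matrix.mul_add, hDdef]; simp
    rw [h1, det_mul, det_mul, det_transpose]
    linear_combination (-A.det) * hBB
  have hev : ∀ i, |hM.eigenvalues i| ≤ 1/2 := by
    intro i
    have hK0 : 0 ≤ K := (specNorm_nonneg _).trans hK
    refine le_trans ?_ hD
    apply abs_le_of_sq_le_sq _ (mul_nonneg hK0 (frobNorm_nonneg _))
    rw [mul_pow]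
    exact (Finset.single_le_sum (f := fun i => hM.eigenvalues i ^ 2) (fun _ _ => sq_nonneg _) (Finset.mem_univ i)).trans hsq
  have hpos : ∀ i, 1 + hM.eigenvalues i ≠ 0 := fun i => by
    have := abs_le.1 (hev i); intro h; linarith
  rw [hdetA, Real.log_mul hSdet.ne' (Finset.prod_ne_zero_iff.2 fun i _ => hpos i),
    Real.log_prod (fun i _ => hpos i), ← htr', htr]
  calc _ = |∑ i, (Real.log (1 + hM.eigenvalues i) - hM.eigenvalues i)| := by
        rw [Finset.sum_sub_distrib]; congr 1; ring
    _ ≤ ∑ i, |Real.log (1 + hM.eigenvalues i) - hM.eigenvalues i| := Finset.abs_sum_le_sum_abs _ _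
    _ ≤ ∑ i, 2 * hM.eigenvalues i ^ 2 := Finset.sum_le_sum fun i _ => abs_log_sub_le _ (hev i)
    _ ≤ _ := by rw [← Finset.mul_sum]; linarith

/-- Fourth moment of the standard Gaussian. -/
def m4 : ℝ := ∫ x, x ^ 4 ∂(gaussianReal 0 1)

lemma m4_nonneg : 0 ≤ m4 := integral_nonneg fun x => by positivity

lemma gauss_fourth (v : NNReal) : ∫ x, x ^ 4 ∂(gaussianReal 0 v) = (v:ℝ)^2 * m4 := by
  have h := gaussianReal_map_const_mul (μ := 0) (v := 1) (Real.sqrt v)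
  have hv : gaussianReal 0 v = (gaussianReal 0 1).map (Real.sqrt v * ·) := by
    rw [h]; congr 1
    · simp
    · ext; simp [Real.sq_sqrt]
  rw [hv, integral_map (by fun_prop) (by fun_prop), m4, ← integral_const_mul]
  congr 1; ext x
  rw [mul_pow]
  have : Real.sqrt v ^ 4 = (v:ℝ)^2 := by
    rw [show 4 = 2 * 2 from rfl, pow_mul, Real.sq_sqrt (NNReal.coe_nonneg v)]
  rw [this]

lemma gauss_second (v : NNReal) : ∫ x, x ^ 2 ∂(gaussianReal 0 v) = (v:ℝ) := by
  have h := variance_fun_id_gaussianReal (μ := 0) (v := v)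
  rwa [variance_of_integral_eq_zero (by fun_prop) (by simp)] at h

section law
variable {p : ℕ} {μ : Measure (Fin p → ℝ)} {S : Matrix (Fin p) (Fin p) ℝ}

lemma law_coord (hμ : IsGaussianLaw μ 0 S) (i : Fin p) :
    μ.map (fun x => x i) = gaussianReal 0 (Real.toNNReal (S i i)) := by
  have h := hμ.2 (Pi.single i 1)
  simpa [Pi.single_apply] using h

lemma law_add (hμ : IsGaussianLaw μ 0 S) (i j : Fin p) :
    μ.map (fun x => x i + x j) =
      gaussianReal 0 (Real.toNNReal (S i i + S i j + (S j i + S j j))) := by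
  have h := hμ.2 (Pi.single i 1 + Pi.single j 1)
  have e1 : (fun x : Fin p → ℝ => ∑ k, (Pi.single i 1 + Pi.single j 1 : Fin p → ℝ) k * x k) =
      fun x => x i + x j := by
    ext x; simp [Pi.single_apply, add_mul, Finset.sum_add_distrib]
  have e2 : (Pi.single i 1 + Pi.single j 1 : Fin p → ℝ) ⬝ᵥ S *ᵥ (Pi.single i 1 + Pi.single j 1) =
      S i i + S i j + (S j i + S j j) := by
    rw [Matrix.mulVec_add, add_dotProduct, dotProduct_add, dotProduct_add]; simp
  rw [e1, e2] at h
  simpa using h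

lemma memLp_coord (hμ : IsGaussianLaw μ 0 S) (i : Fin p) : MemLp (fun x => x i) 4 μ := by
  have h := memLp_id_gaussianReal' (μ := 0) (v := Real.toNNReal (S i i)) 4 (by simp)
  have hm : AEMeasurable (fun x : Fin p → ℝ => x i) μ := (measurable_pi_apply i).aemeasurable
  rw [← law_coord hμ i, memLp_map_measure_iff (by fun_prop) hm] at h
  exact h

lemma int_fourth (hμ : IsGaussianLaw μ 0 S) (hS : S.PosDef) (i : Fin p) :
    Integrable (fun x => x i ^ 4) μ ∧ ∫ x, x i ^ 4 ∂μ = S i i ^ 2 * m4 := by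
  constructor
  · have := (memLp_coord hμ i).integrable_norm_pow (p := 4) (by simp)
    refine this.congr (ae_of_all _ fun x => ?_)
    simp only [Real.norm_eq_abs]
    exact Even.pow_abs (by decide) _
  · have := gauss_fourth (Real.toNNReal (S i i))
    rw [← law_coord hμ i, integral_map (measurable_pi_apply i).aemeasurable (by fun_prop),
      Real.coe_toNNReal _ (hS.diag_pos.le)] at this
    exact this

lemma memLp_prod (hμ : IsGaussianLaw μ 0 S) (i j : Fin p) :
    MemLp (fun x => x i * x j) 2 μ := by
  have : ENNReal.HolderTriple 4 4 2 := ⟨by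
    rw [← ENNReal.toReal_eq_toReal_iff' (by simp) (by simp), ENNReal.toReal_add (by simp) (by simp)]
    norm_num⟩
  exact (memLp_coord hμ j).mul (memLp_coord hμ i)

lemma int_second (hμ : IsGaussianLaw μ 0 S) (hS : S.PosDef) (i : Fin p) :
    ∫ x, x i ^ 2 ∂μ = S i i := by
  have := gauss_second (Real.toNNReal (S i i))
  rw [← law_coord hμ i, integral_map (measurable_pi_apply i).aemeasurable (by fun_prop),
    Real.coe_toNNReal _ (hS.diag_pos.le)] at this
  exact this

lemma int_prod (hμ : IsGaussianLaw μ 0 S) (hS : S.PosDef) (i j : Fin p) :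
    ∫ x, x i * x j ∂μ = S i j := by
  have := hμ.1
  have hInt : ∀ i j, Integrable (fun x : Fin p → ℝ => x i * x j) μ := fun i j =>
    (memLp_prod hμ i j).integrable (by norm_num)
  have hpos : 0 ≤ S i i + S i j + (S j i + S j j) := by
    have h := hS.posSemidef.dotProduct_mulVec_nonneg (Pi.single i 1 + Pi.single j 1)
    rw [Matrix.mulVec_add, star_trivial, add_dotProduct, dotProduct_add, dotProduct_add] at h
    simpa using h
  have h := gauss_second (Real.toNNReal (S i i + S i j + (S j i + S j j)))
  rw [← law_add hμ i j, integral_map (by fun_prop) (by fun_prop), Real.coe_toNNReal _ hpos] at h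
  have e : ∀ x : Fin p → ℝ, (x i + x j)^2 = x i * x i + 2 * (x i * x j) + x j * x j := fun x => by ring
  simp only [e] at h
  have hadd : Integrable (fun x : Fin p → ℝ => x i * x i + 2 * (x i * x j)) μ :=
    (hInt i i).add ((hInt i j).const_mul 2)
  rw [integral_add hadd (hInt j j), integral_add (hInt i i) ((hInt i j).const_mul 2), integral_const_mul] at h
  have hi := int_second hμ hS i
  have hj := int_second hμ hS j
  simp only [sq] at hi hj
  have hsym : S j i = S i j := by simpa using hS.1.apply i j
  linarith

lemma var_prod (hμ : IsGaussianLaw μ 0 S) (hS : S.PosDef) (K : ℝ) (hK : specNorm S ≤ K)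
    (i j : Fin p) : Var[fun x => x i * x j; μ] ≤ K ^ 2 * m4 := by
  have := hμ.1
  have hd : ∀ k, S k k ^ 2 ≤ K ^ 2 := fun k =>
    pow_le_pow_left₀ hS.diag_pos.le ((diag_le_specNorm S k).trans hK) 2
  refine (variance_le_expectation_sq (by fun_prop)).trans ?_
  calc ∫ x, ((fun x : Fin p → ℝ => x i * x j) ^ 2) x ∂μ
      ≤ ∫ x, (1/2 * x i ^ 4 + 1/2 * x j ^ 4) ∂μ := by
        apply integral_mono
        · exact (memLp_prod hμ i j).integrable_sq
        · exact ((int_fourth hμ hS i).1.const_mul _).add ((int_fourth hμ hS j).1.const_mul _)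
        · intro x
          simp only [Pi.pow_apply]
          nlinarith [sq_nonneg (x i ^ 2 - x j ^ 2)]
    _ = 1/2 * (S i i ^ 2 * m4) + 1/2 * (S j j ^ 2 * m4) := by
        rw [integral_add ((int_fourth hμ hS i).1.const_mul _) ((int_fourth hμ hS j).1.const_mul _),
          integral_const_mul, integral_const_mul, (int_fourth hμ hS i).2, (int_fourth hμ hS j).2]
    _ ≤ K ^ 2 * m4 := by
        nlinarith [mul_le_mul_of_nonneg_right (hd i) m4_nonneg,
          mul_le_mul_of_nonneg_right (hd j) m4_nonneg]

lemma entry_bound (hμ : IsGaussianLaw μ 0 S) (hS : S.PosDef) (K : ℝ) (hK : specNorm S ≤ K)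
    (n : ℕ) (hn : 0 < n) (i j : Fin p) :
    Integrable (fun x => (sampleCov x - S) i j ^ 2) (iidLaw n μ) ∧
      ∫ x, (sampleCov x - S) i j ^ 2 ∂(iidLaw n μ) ≤ K ^ 2 * m4 / n := by
  have := hμ.1
  unfold iidLaw
  have hn' : (0:ℝ) < n := by exact_mod_cast hn
  set Y : (Fin p → ℝ) → ℝ := fun x => x i * x j with hY
  have hYm : MemLp Y 2 μ := memLp_prod hμ i j
  set W : (Fin n → Fin p → ℝ) → ℝ := ∑ k : Fin n, fun x => Y (x k) with hW
  have hent : ∀ x : Fin n → Fin p → ℝ, (sampleCov x) i j = (n:ℝ)⁻¹ * W x := by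
    intro x
    simp [sampleCov, hW, hY, Matrix.sum_apply, vecMulVec_apply, Finset.sum_apply]
  have hWm : MemLp W 2 (Measure.pi fun _ : Fin n => μ) := by
    apply memLp_finsetSum'
    intro k _
    exact hYm.comp_measurePreserving (measurePreserving_eval (fun _ : Fin n => μ) k)
  have hWint : ∫ x, W x ∂(Measure.pi fun _ : Fin n => μ) = n * S i j := by
    simp only [hW, Finset.sum_apply]
    rw [integral_finsetSum]
    · have : ∀ k : Fin n, ∫ x : Fin n → Fin p → ℝ, Y (x k) ∂(Measure.pi fun _ : Fin n => μ) = S i j := by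
        intro k
        rw [integral_comp_eval (μ := fun _ : Fin n => μ) (f := Y) hYm.1]
        exact int_prod hμ hS i j
      simp [this]
    · intro k _
      exact (hYm.comp_measurePreserving (measurePreserving_eval (fun _ : Fin n => μ) k)).integrable (by norm_num)
  have hvar : Var[W; Measure.pi fun _ : Fin n => μ] ≤ n * (K ^ 2 * m4) := by
    rw [hW, variance_sum_pi (fun _ => hYm)]
    simpa using mul_le_mul_of_nonneg_left (var_prod hμ hS K hK i j) hn'.le
  have hform : (fun x : Fin n → Fin p → ℝ => (sampleCov x - S) i j ^ 2) =
      fun x => ((n:ℝ)⁻¹)^2 * (W x - n * S i j)^2 := by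
    ext x
    rw [Matrix.sub_apply, hent]
    field_simp
  rw [hform]
  constructor
  · exact (hWm.sub (memLp_const _)).integrable_sq.const_mul _
  · rw [integral_const_mul]
    have := variance_eq_integral (X := W) hWm.aestronglyMeasurable.aemeasurable
    rw [hWint] at this
    rw [← this]
    calc ((n:ℝ)⁻¹)^2 * Var[W; Measure.pi fun _ : Fin n => μ] ≤ ((n:ℝ)⁻¹)^2 * (n * (K ^ 2 * m4)) := by gcongr
      _ = _ := by field_simp

lemma frob_markov (hμ : IsGaussianLaw μ 0 S) (hS : S.PosDef) (K : ℝ) (hK : specNorm S ≤ K)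
    (n : ℕ) (hn : 0 < n) (t : ℝ) (ht : 0 < t) :
    iidLaw n μ {x | t ≤ frobNorm (sampleCov x - S) ^ 2} ≤
      ENNReal.ofReal (K ^ 2 * m4 * ((p:ℝ) ^ 2 / n) / t) := by
  have := hμ.1
  have : IsProbabilityMeasure (iidLaw n μ) := by unfold iidLaw; infer_instance
  have hI : Integrable (fun x => frobNorm (sampleCov x - S) ^ 2) (iidLaw n μ) := by
    simp only [frobNorm_sq]
    exact integrable_finsetSum _ fun i _ => integrable_finsetSum _ fun j _ =>
      (entry_bound hμ hS K hK n hn i j).1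
  have hE : ∫ x, frobNorm (sampleCov x - S) ^ 2 ∂(iidLaw n μ) ≤ K ^ 2 * m4 * ((p:ℝ) ^ 2 / n) := by
    simp only [frobNorm_sq]
    rw [integral_finsetSum _ fun i _ => integrable_finsetSum _ fun j _ =>
      (entry_bound hμ hS K hK n hn i j).1]
    calc _ ≤ ∑ i : Fin p, ∑ j : Fin p, K ^ 2 * m4 / n := by
          refine Finset.sum_le_sum fun i _ => ?_
          rw [integral_finsetSum _ fun j _ => (entry_bound hμ hS K hK n hn i j).1]
          exact Finset.sum_le_sum fun j _ => (entry_bound hμ hS K hK n hn i j).2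
      _ = _ := by simp; ring
  have hM := mul_meas_ge_le_integral_of_nonneg (ae_of_all _ fun x => sq_nonneg _) hI t
  rw [ENNReal.le_ofReal_iff_toReal_le (measure_ne_top _ _)]
  · rw [le_div_iff₀ ht, mul_comm]
    exact hM.trans hE
  · have := m4_nonneg
    positivity
end law

/-- **Lemma 3.1 (approximate linearity of the log-determinant functional).** -/
theorem logdet_approx_linear
    (p : ℕ → ℕ) (hp : Tendsto p atTop atTop)
    (Sstar : ∀ n, Matrix (Fin (p n)) (Fin (p n)) ℝ)
    (hSpd : ∀ n, (Sstar n).PosDef)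
    (gauss : ∀ n, Measure (Fin (p n) → ℝ))
    (hgauss : ∀ n, IsGaussianLaw (gauss n) 0 (Sstar n))
    -- ‖Σ*‖ ∨ ‖Ω*‖ = O(1) and p³/n = o(1)
    (hbound : BigO1 (fun n => max (specNorm (Sstar n)) (specNorm (Sstar n)⁻¹)))
    (hpn : SmallO1 (fun n => (p n : ℝ) ^ 3 / n))
    (δ : ℕ → ℝ) (hδ : SmallO1 δ) :
    -- sup over {Σ ≻ 0 : √(n/p) ‖Σ-Σ*‖_F² ∨ √p ‖Σ-Σ*‖_F ≤ δ_n} of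
    -- √(n/p) |log det Σ - log det Σ̂ - tr((Σ - Σ̂) Ω*)| = o_P(1)
    oP (fun n => iidLaw n (gauss n)) (fun n x =>
      sSup ((fun S => Real.sqrt ((n : ℝ) / p n) *
          |Real.log S.det - Real.log (sampleCov x).det -
            ((S - sampleCov x) * (Sstar n)⁻¹).trace|) ''
        {S | S.PosDef ∧
          max (Real.sqrt ((n : ℝ) / p n) * frobNorm (S - Sstar n) ^ 2)
            (Real.sqrt (p n) * frobNorm (S - Sstar n)) ≤ δ n})) := by
  obtain ⟨C, hC⟩ := hbound
  intro ε hε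
  set K : ℝ := max C 1 with hKdef
  have hK : 0 < K := lt_of_lt_of_le one_pos (le_max_right _ _)
  have hK1 : ∀ n, specNorm (Sstar n) ≤ K := fun n =>
    (le_max_left _ _).trans ((hC n).trans (le_max_left _ _))
  have hK2 : ∀ n, specNorm (Sstar n)⁻¹ ≤ K := fun n =>
    (le_max_right _ _).trans ((hC n).trans (le_max_left _ _))
  set c : ℝ := K ^ 2 * m4 with hc
  have hc0 : 0 ≤ c := mul_nonneg (sq_nonneg _) m4_nonneg
  set a : ℝ := 1 / (4 * K ^ 2) with ha
  set b : ℝ := ε / (8 * K ^ 2) with hb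
  have ha0 : 0 < a := by positivity
  have hb0 : 0 < b := by positivity
  set q : ℕ → ℝ := fun n => (p n : ℝ) ^ 3 / n with hq
  have hlim : Tendsto (fun n => ENNReal.ofReal (c * q n / a) +
      ENNReal.ofReal (c * Real.sqrt (q n) / b)) atTop (nhds 0) := by
    have hq0 : Tendsto q atTop (nhds 0) := hpn
    have h1 : Tendsto (fun n => c * q n / a) atTop (nhds 0) := by
      simpa using (hq0.const_mul c).div_const a
    have h2 : Tendsto (fun n => c * Real.sqrt (q n) / b) atTop (nhds 0) := by
      simpa using ((hq0.sqrt).const_mul c).div_const b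
    simpa using (ENNReal.tendsto_ofReal h1).add (ENNReal.tendsto_ofReal h2)
  have hd1 : ∀ᶠ n in atTop, δ n < 1 / (2 * K) := hδ.eventually_lt_const (by positivity)
  have hd2 : ∀ᶠ n in atTop, δ n < ε / (8 * K ^ 2) := hδ.eventually_lt_const (by positivity)
  refine tendsto_of_tendsto_of_tendsto_of_le_of_le' tendsto_const_nhds hlim
    (Eventually.of_forall fun _ => zero_le) ?_
  filter_upwards [hd1, hd2, eventually_gt_atTop 0, hp.eventually_ge_atTop 1] with n hδ1 hδ2 hn hpn1
  have hn' : (0 : ℝ) < n := by exact_mod_cast hn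
  have hp1 : (1 : ℝ) ≤ p n := by exact_mod_cast hpn1
  have hp0 : (0 : ℝ) < p n := by linarith
  set r : ℝ := Real.sqrt ((n : ℝ) / p n) with hr
  have hr0 : 0 < r := Real.sqrt_pos.2 (by positivity)
  have hsub : {x : Fin n → Fin (p n) → ℝ | ε ≤ |sSup ((fun S => r *
          |Real.log S.det - Real.log (sampleCov x).det -
            ((S - sampleCov x) * (Sstar n)⁻¹).trace|) ''
        {S | S.PosDef ∧ max (r * frobNorm (S - Sstar n) ^ 2)
            (Real.sqrt (p n) * frobNorm (S - Sstar n)) ≤ δ n})|} ⊆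
      {x | a ≤ frobNorm (sampleCov x - Sstar n) ^ 2} ∪
        {x | b / r ≤ frobNorm (sampleCov x - Sstar n) ^ 2} := by
    intro x hx
    by_contra hcon
    simp only [Set.mem_union, Set.mem_ofPred_eq, not_or, not_le] at hcon
    obtain ⟨hT1, hT2⟩ := hcon
    set T := frobNorm (sampleCov x - Sstar n) with hT
    have hTK : K * T ≤ 1 / 2 := by
      refine (abs_le_of_sq_le_sq' ?_ (by norm_num)).2
      rw [mul_pow]
      calc K ^ 2 * T ^ 2 ≤ K ^ 2 * a := by gcongr
        _ = (1 / 2) ^ 2 := by rw [ha]; field_simp; norm_num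
    have hrT : r * T ^ 2 ≤ b := by
      rw [lt_div_iff₀ hr0] at hT2; linarith
    have hherm : (sampleCov x).IsHermitian := by
      ext i j
      simp [sampleCov, Matrix.sum_apply, vecMulVec_apply, mul_comm]
    have hB := logdet_det_bound (Sstar n) (sampleCov x) (hSpd n) hherm K (hK2 n) hTK
    have hle : sSup ((fun S => r *
          |Real.log S.det - Real.log (sampleCov x).det -
            ((S - sampleCov x) * (Sstar n)⁻¹).trace|) ''
        {S | S.PosDef ∧ max (r * frobNorm (S - Sstar n) ^ 2)
            (Real.sqrt (p n) * frobNorm (S - Sstar n)) ≤ δ n}) ≤ ε / 2 := by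
      apply Real.sSup_le _ (by positivity)
      rintro _ ⟨S, ⟨hS, hSδ⟩, rfl⟩
      have hS1 := (le_max_left _ _).trans hSδ
      have hS2 := (le_max_right _ _).trans hSδ
      have hF : frobNorm (S - Sstar n) ≤ δ n := by
        refine le_trans ?_ hS2
        exact le_mul_of_one_le_left (frobNorm_nonneg _) (Real.one_le_sqrt.2 hp1)
      have hFK : K * frobNorm (S - Sstar n) ≤ 1 / 2 := by
        calc K * frobNorm (S - Sstar n) ≤ K * (1 / (2 * K)) := by
              gcongr; exact hF.trans hδ1.le
          _ = 1 / 2 := by field_simp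
      have hA := logdet_det_bound (Sstar n) S (hSpd n) hS.1 K (hK2 n) hFK
      have hsplit : Real.log S.det - Real.log (sampleCov x).det -
            ((S - sampleCov x) * (Sstar n)⁻¹).trace =
          (Real.log S.det - Real.log (Sstar n).det - ((S - Sstar n) * (Sstar n)⁻¹).trace) -
          (Real.log (sampleCov x).det - Real.log (Sstar n).det -
            ((sampleCov x - Sstar n) * (Sstar n)⁻¹).trace) := by
        simp only [Matrix.sub_mul, Matrix.trace_sub]; ring
      have hkey : |Real.log S.det - Real.log (sampleCov x).det -
            ((S - sampleCov x) * (Sstar n)⁻¹).trace| ≤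
          2 * (K ^ 2 * frobNorm (S - Sstar n) ^ 2) + 2 * (K ^ 2 * T ^ 2) := by
        rw [hsplit]
        exact (abs_sub _ _).trans (add_le_add hA hB)
      calc r * |Real.log S.det - Real.log (sampleCov x).det -
            ((S - sampleCov x) * (Sstar n)⁻¹).trace|
          ≤ r * (2 * (K ^ 2 * frobNorm (S - Sstar n) ^ 2) + 2 * (K ^ 2 * T ^ 2)) := by gcongr
        _ = 2 * K ^ 2 * (r * frobNorm (S - Sstar n) ^ 2 + r * T ^ 2) := by ring
        _ ≤ 2 * K ^ 2 * (ε / (8 * K ^ 2) + b) := by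
            gcongr
            exact hS1.trans hδ2.le
        _ = ε / 2 := by rw [hb]; field_simp; norm_num
    have hge : 0 ≤ sSup ((fun S => r *
          |Real.log S.det - Real.log (sampleCov x).det -
            ((S - sampleCov x) * (Sstar n)⁻¹).trace|) ''
        {S | S.PosDef ∧ max (r * frobNorm (S - Sstar n) ^ 2)
            (Real.sqrt (p n) * frobNorm (S - Sstar n)) ≤ δ n}) := by
      apply Real.sSup_nonneg
      rintro _ ⟨S, _, rfl⟩
      positivity
    have hx' := hx.out
    rw [abs_of_nonneg hge] at hx'
    linarith
  refine (measure_mono hsub).trans ((measure_union_le _ _).trans (add_le_add ?_ ?_))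
  · refine (frob_markov (hgauss n) (hSpd n) K (hK1 n) n hn a ha0).trans ?_
    apply ENNReal.ofReal_le_ofReal
    rw [← hc, hq]
    dsimp only
    gcongr
    norm_num
  · refine (frob_markov (hgauss n) (hSpd n) K (hK1 n) n hn (b / r) (by positivity)).trans ?_
    apply ENNReal.ofReal_le_ofReal
    have hsq : Real.sqrt (q n) = (p n : ℝ) ^ 2 / n * r := by
      rw [hr, ← Real.sqrt_sq (show (0 : ℝ) ≤ (p n : ℝ) ^ 2 / n by positivity),
        ← Real.sqrt_mul (sq_nonneg _)]
      congr 1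
      rw [hq]
      field_simp
    rw [← hc, hsq]
    apply le_of_eq
    field_simp

end BvMPaper
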